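/- arXiv:2103.01344 — 2 statements merged into one kernel-verified Lean document; each statement's English description precedes it below -/
import Mathlib

section
/- (Correctness of the multiparty FFT_D∘FFT_S^{-1} algorithm.) Let a ∈ F^n with n = K·m, let v_{K+1},...,v_{K+T} ∈ F^m be arbitrary, and let u(z) be the F^m-valued Lagrange sharing polynomial with u(β_j) = a^{(j)} for j ≤ K and u(β_j) = v_j for K < j ≤ K+T. For each θ ∈ {1,...,N} define x_j^{(θ)} ∈ F^m by x_{j,t}^{(θ)} = ( (1/K) Σ_{l=1}^{K} ω^{−(Kt+j−1)(l−1)} · FFT_{S'}^{-1}(u(α_θ)) · ∏_{k=1,k≠θ}^{N} (β_l − α_k)/(α_θ − α_k) )_{(Kt+j−1) mod m}; let v_j^{(θ)} ∈ F^m (j ∈ {K+1,...,K+T}) be arbitrary and u^{(θ)}(z) the Lagrange sharing polynomial with u^{(θ)}(β_j) = x_j^{(θ)} for j ≤ K and u^{(θ)}(β_j) = v_j^{(θ)} for j > K; let u_θ = Σ_{γ=1}^{N} u^{(γ)}(α_θ); let w_θ ∈ F^m with (w_θ)_r = Σ_{t=0}^{m−1} (u_θ)_t · (η^K ω^{Kr})^t;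 and let u_p(z) = Σ_{θ=1}^{N} w_θ · ∏_{k=1,k≠θ}^{N} (z − α_k)/(α_θ − α_k). Then for every i ∈ {0,...,n−1}: Σ_{j=1}^{K} (ω^i η)^{j−1} · (u_p(β_j))_{i mod m} = (FFT_D(FFT_S^{-1}(a)))_i = Σ_{μ=0}^{n−1} (FFT_S^{-1}(a))_μ · (ηω^i)^μ. -/
/-- The index `K*t + j` (stride-`K` subsampling) as an element of `Fin n` when `n = K*m`. -/
def strideIx {n : ℕ} (K m : ℕ) (hnKm : n = K * m) (t : Fin m) (j : Fin K) : Fin n :=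
  ⟨K * (t : ℕ) + (j : ℕ), by
    have ht := t.isLt
    have hj := j.isLt
    subst hnKm
    calc K * (t : ℕ) + (j : ℕ) < K * (t : ℕ) + K := by omega
      _ = K * ((t : ℕ) + 1) := by ring
      _ ≤ K * m := Nat.mul_le_mul_left K (by omega)⟩

open Finset in
/-- Interpolating at the nodes `α` the values of the polynomial that interpolates `c` at the
nodes `β`, and evaluating at `β l`, recovers `c l`. -/
theorem sum_lagrange_comp_lagrange {F ι : Type*} [Field F] [Fintype ι] [DecidableEq ι]
    {α β : ι → F} (hα : Function.Injective α) (hβ : Function.Injective β) (c : ι → F) (l : ι) :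
    ∑ θ, (∏ k ∈ univ.erase θ, (β l - α k) / (α θ - α k)) *
      ∑ j, (∏ k ∈ univ.erase j, (α θ - β k) / (β j - β k)) * c j = c l := by
  have eval_interpolate (w : ι → F) (d : ι → F) (z : F) :
      (Lagrange.interpolate univ w d).eval z =
        ∑ j, (∏ k ∈ univ.erase j, (z - w k) / (w j - w k)) * d j := by
    simp only [Lagrange.interpolate_apply, Polynomial.eval_finsetSum, Polynomial.eval_mul,
      Polynomial.eval_C, Lagrange.basis, Polynomial.eval_prod, Lagrange.basisDivisor,
      Polynomial.eval_sub, Polynomial.eval_X]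
    exact sum_congr rfl fun j _ => by
      rw [mul_comm]
      congr 1
      exact prod_congr rfl fun k _ => by rw [div_eq_mul_inv, mul_comm]
  have h := Lagrange.eq_interpolate_of_eval_eq (s := univ) (v := α)
    (f := Lagrange.interpolate univ β c) (fun θ => (Lagrange.interpolate univ β c).eval (α θ))
    hα.injOn (Lagrange.degree_interpolate_lt _ hβ.injOn) (fun _ _ => rfl)
  have h' := congrArg (Polynomial.eval (β l)) h
  rw [Lagrange.eval_interpolate_at_node _ hβ.injOn (mem_univ l), eval_interpolate] at h'
  simp only [eval_interpolate β] at h'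
  exact h'.symm

open Finset in
/-- `sum_lagrange_comp_lagrange` for values split into `K` data and `T` masking entries. -/
theorem sum_lagrange_comp_lagrange_add {F : Type*} [Field F] {K T : ℕ}
    {α β : Fin (K + T) → F} (hα : Function.Injective α) (hβ : Function.Injective β)
    (p : Fin K → F) (q : Fin T → F) (l : Fin K) :
    ∑ θ, (∏ k ∈ univ.erase θ, (β (Fin.castAdd T l) - α k) / (α θ - α k)) *
      (∑ j : Fin K, (∏ k ∈ univ.erase (Fin.castAdd T j),
          (α θ - β k) / (β (Fin.castAdd T j) - β k)) * p j +
        ∑ j : Fin T, (∏ k ∈ univ.erase (Fin.natAdd K j),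
          (α θ - β k) / (β (Fin.natAdd K j) - β k)) * q j) = p l := by
  have h := sum_lagrange_comp_lagrange hα hβ (Fin.append p q) (Fin.castAdd T l)
  rw [Fin.append_left] at h
  refine Eq.trans (sum_congr rfl fun θ _ => ?_) h
  congr 1
  simp only [Fin.sum_univ_add, Fin.append_left, Fin.append_right]

theorem sum_eq_sum_strideIx {M : Type*} [AddCommMonoid M] {n K m : ℕ} (hnKm : n = K * m)
    (f : Fin n → M) : ∑ μ, f μ = ∑ t : Fin m, ∑ j : Fin K, f (strideIx K m hnKm t j) := by
  rw [← Fintype.sum_prod_type', ← Equiv.sum_comp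
    (finProdFinEquiv.trans (finCongr (show m * K = n by rw [hnKm, mul_comm]))) f]
  refine Finset.sum_congr rfl fun y _ => congrArg f (Fin.ext ?_)
  simp [strideIx, add_comm]

/-- An exponent that is scaled by `K` may be reduced modulo `m` when the base has order
dividing `K * m`. -/
theorem pow_mul_mod_of_pow_mul_eq_one {M : Type*} [Monoid M] {ζ : M} {K m : ℕ}
    (h : ζ ^ (K * m) = 1) (e : ℕ) : ζ ^ (K * (e % m)) = ζ ^ (K * e) := by
  conv_rhs => rw [← Nat.mod_add_div e m, mul_add, ← mul_assoc, pow_add, pow_mul ζ (K * m), h,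
    one_pow, mul_one]

/-- Theorem 1 of the paper: correctness of the multiparty computation of
`FFT_D (FFT_S⁻¹ (a))`.  Here `ω` is a primitive `n`-th root of unity, `n = K·m`,
`η ∉ S = {1,ω,…,ω^{n-1}}`, `N = K + T`; `u` is the Lagrange sharing polynomial of the
stride-`K` partitions `a^{(j)}` of `a`; `x θ j` is the vector `x_j^{(θ)}` of (14);
`uθf θ` is the Lagrange resharing polynomial `u^{(θ)}` with randomness `v' θ`;
`usum θ = u_θ = ∑_γ u^{(γ)}(α_θ)`; `w θ = FFT_{D'}(u_θ)`; and `u_p` is the decoding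
polynomial (9).  The output `∑_j (ω^i η)^{j-1} (u_p(β_j))_{i mod m}` equals
`(FFT_D(FFT_S⁻¹(a)))_i = ∑_μ (FFT_S⁻¹(a))_μ (ηω^i)^μ`. -/
theorem multiparty_fft_correctness
    {F : Type*} [Field F] (n K T m : ℕ) (hn : 0 < n) (hK : 0 < K) (hT : 0 < T) (hm : 0 < m)
    (hnKm : n = K * m)
    (ω : F) (hω1 : ω ^ n = 1) (hωprim : ∀ m', 0 < m' → m' < n → ω ^ m' ≠ 1)
    (η : F) (hη : ∀ i : Fin n, η ≠ ω ^ (i : ℕ))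
    (β : Fin (K + T) → F) (α : Fin (K + T) → F)
    (hβ : Function.Injective β) (hα : Function.Injective α)
    (hαβ : ∀ i j, α i ≠ β j)
    (a : Fin n → F) (v : Fin T → Fin m → F)
    (u : F → Fin m → F)
    (hu : ∀ z, u z =
      (∑ j : Fin K, (∏ k ∈ Finset.univ.erase (Fin.castAdd T j),
          (z - β k) / (β (Fin.castAdd T j) - β k)) •
            (fun t : Fin m => a (strideIx K m hnKm t j))) +
      (∑ j : Fin T, (∏ k ∈ Finset.univ.erase (Fin.natAdd K j),
          (z - β k) / (β (Fin.natAdd K j) - β k)) • v j))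
    (x : Fin (K + T) → Fin K → Fin m → F)
    (hx : ∀ (θ : Fin (K + T)) (j : Fin K) (t : Fin m), x θ j t =
      (K : F)⁻¹ * ∑ l : Fin K,
        ω⁻¹ ^ ((K * (t : ℕ) + (j : ℕ)) * (l : ℕ)) *
        (∏ k ∈ Finset.univ.erase θ, (β (Fin.castAdd T l) - α k) / (α θ - α k)) *
        ((m : F)⁻¹ * ∑ t' : Fin m,
          ω⁻¹ ^ (K * ((K * (t : ℕ) + (j : ℕ)) % m) * (t' : ℕ)) * u (α θ) t'))
    (v' : Fin (K + T) → Fin T → Fin m → F)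
    (uθf : Fin (K + T) → F → Fin m → F)
    (huθf : ∀ (θ : Fin (K + T)) (z : F), uθf θ z =
      (∑ j : Fin K, (∏ k ∈ Finset.univ.erase (Fin.castAdd T j),
          (z - β k) / (β (Fin.castAdd T j) - β k)) • x θ j) +
      (∑ j : Fin T, (∏ k ∈ Finset.univ.erase (Fin.natAdd K j),
          (z - β k) / (β (Fin.natAdd K j) - β k)) • v' θ j))
    (usum : Fin (K + T) → Fin m → F)
    (husum : ∀ θ : Fin (K + T), usum θ = ∑ γ : Fin (K + T), uθf γ (α θ))
    (w : Fin (K + T) → Fin m → F)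
    (hw : ∀ (θ : Fin (K + T)) (r : Fin m),
      w θ r = ∑ t : Fin m, usum θ t * (η ^ K * ω ^ (K * (r : ℕ))) ^ (t : ℕ))
    (up : F → Fin m → F)
    (hup : ∀ z, up z = ∑ θ : Fin (K + T),
      (∏ k ∈ Finset.univ.erase θ, (z - α k) / (α θ - α k)) • w θ)
    (i : Fin n) :
    ∑ j : Fin K, (ω ^ (i : ℕ) * η) ^ (j : ℕ) *
        up (β (Fin.castAdd T j)) ⟨(i : ℕ) % m, Nat.mod_lt _ hm⟩ =
      ∑ μ : Fin n, ((n : F)⁻¹ * ∑ ν : Fin n, ω⁻¹ ^ ((μ : ℕ) * (ν : ℕ)) * a ν) *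
        (η * ω ^ (i : ℕ)) ^ (μ : ℕ) := by
  have hu_decode (l : Fin K) (t : Fin m) :
      ∑ θ, (∏ k ∈ Finset.univ.erase θ, (β (Fin.castAdd T l) - α k) / (α θ - α k)) * u (α θ) t =
        a (strideIx K m hnKm t l) := by
    rw [← sum_lagrange_comp_lagrange_add hα hβ (fun j => a (strideIx K m hnKm t j))
      (fun j => v j t) l]
    simp [hu]
  have husum_decode (l : Fin K) (t : Fin m) :
      ∑ θ, (∏ k ∈ Finset.univ.erase θ, (β (Fin.castAdd T l) - α k) / (α θ - α k)) * usum θ t =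
        ∑ γ, x γ l t := by
    rw [← sum_lagrange_comp_lagrange_add hα hβ (fun j => ∑ γ, x γ j t)
      (fun j => ∑ γ, v' γ j t) l]
    refine Finset.sum_congr rfl fun θ _ => ?_
    congr 1
    simp only [husum, huθf, Finset.sum_add_distrib, Pi.add_apply, Finset.sum_apply, Pi.smul_apply,
      smul_eq_mul, Finset.mul_sum]
    congr 1 <;> exact Finset.sum_comm
  have hω_inv : ω⁻¹ ^ (K * m) = 1 := by rw [← hnKm, inv_pow, hω1, inv_one]
  have hx_sum (j : Fin K) (t : Fin m) :
      ∑ γ, x γ j t = (n : F)⁻¹ * ∑ ν : Fin n,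
        ω⁻¹ ^ ((strideIx K m hnKm t j : ℕ) * (ν : ℕ)) * a ν := by
    rw [sum_eq_sum_strideIx hnKm]
    simp only [hx, ← hu_decode, Finset.mul_sum]
    rw [Finset.sum_comm, Finset.sum_comm (s := (Finset.univ : Finset (Fin m)))]
    refine Finset.sum_congr rfl fun l _ => ?_
    rw [Finset.sum_comm]
    refine Finset.sum_congr rfl fun t' _ => Finset.sum_congr rfl fun θ _ => ?_
    have hpow : ω⁻¹ ^ ((K * (t : ℕ) + j) * (K * (t' : ℕ) + l)) =
        ω⁻¹ ^ ((K * (t : ℕ) + j) * l) * ω⁻¹ ^ (K * ((K * (t : ℕ) + j) % m) * t') := by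
      rw [pow_mul _ (K * ((K * (t : ℕ) + j) % m)), pow_mul_mod_of_pow_mul_eq_one hω_inv,
        ← pow_mul, ← pow_add]
      congr 1
      ring
    have hn_inv : (n : F)⁻¹ = (K : F)⁻¹ * (m : F)⁻¹ := by
      rw [hnKm, Nat.cast_mul, mul_inv]
    simp only [strideIx, hpow, hn_inv]
    ring
  have hup_decode (j : Fin K) (r : Fin m) :
      up (β (Fin.castAdd T j)) r =
        ∑ t : Fin m, (∑ γ, x γ j t) * (η ^ K * ω ^ (K * (r : ℕ))) ^ (t : ℕ) := by
    simp only [hup, Finset.sum_apply, Pi.smul_apply, smul_eq_mul, hw, ← husum_decode,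
      Finset.mul_sum, Finset.sum_mul, mul_assoc]
    exact Finset.sum_comm
  rw [sum_eq_sum_strideIx hnKm, Finset.sum_comm]
  refine Finset.sum_congr rfl fun j _ => ?_
  rw [hup_decode, Finset.mul_sum]
  refine Finset.sum_congr rfl fun t _ => ?_
  rw [hx_sum, pow_mul_mod_of_pow_mul_eq_one (hnKm ▸ hω1)]
  have hpow : (η * ω ^ (i : ℕ)) ^ (strideIx K m hnKm t j : ℕ) =
      (ω ^ (i : ℕ) * η) ^ (j : ℕ) * (η ^ K * ω ^ (K * (i : ℕ))) ^ (t : ℕ) := by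
    simp only [strideIx]
    ring
  rw [hpow]
  ring
end

section
/- (Correctness of the multiparty FFT_D^{-1} algorithm.) Let a ∈ F^n with n = K·m, let v_{K+1},...,v_{K+T} ∈ F^m be arbitrary, and let u(z) be the F^m-valued Lagrange sharing polynomial with u(β_j) = a^{(j)} for j ∈ {1,...,K} and u(β_j) = v_j for j ∈ {K+1,...,K+T}. Define u''(z) = Σ_{γ=1}^{N} FFT_{S'}^{-1}(u(α_γ)) · ∏_{k=1,k≠γ}^{N} (z − α_k)/(α_γ − α_k). Then for every i ∈ {0,...,n−1}: η^{−i} · (1/K) · Σ_{j=1}^{K} ω^{−i(j−1)} · (u''(β_j))_{i mod m} = (FFT_D^{-1}(a))_i = η^{−i}·(1/n) Σ_{μ=0}^{n−1} ω^{−iμ} a_μ. -/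
open Polynomial in
/-- The Lagrange basis polynomial evaluates to the usual product of quotients. -/
theorem eval_lagrange_basis_eq_prod_div {F ι : Type*} [Field F] [DecidableEq ι]
    (s : Finset ι) (x : ι → F) (j : ι) (z : F) :
    (Lagrange.basis s x j).eval z = ∏ k ∈ s.erase j, (z - x k) / (x j - x k) := by
  simp [Lagrange.basis, Lagrange.basisDivisor, eval_prod, div_eq_inv_mul]

open Polynomial in
/-- A Lagrange interpolant, resampled at as many other nodes and interpolated again, is unchanged. -/
theorem sum_prod_div_mul_eval_interpolate {F ι : Type*} [Field F] [Fintype ι] [DecidableEq ι]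
    {x y : ι → F} (hx : Function.Injective x) (hy : Function.Injective y) (w : ι → F) (z : F) :
    ∑ γ, (∏ k ∈ Finset.univ.erase γ, (z - y k) / (y γ - y k)) *
        (Lagrange.interpolate Finset.univ x w).eval (y γ) =
      (Lagrange.interpolate Finset.univ x w).eval z := by
  have h := Lagrange.eq_interpolate (s := Finset.univ) (v := y) hy.injOn
    (Lagrange.degree_interpolate_lt w hx.injOn)
  conv_rhs => rw [h]
  simp [Lagrange.interpolate_apply, eval_finsetSum, eval_lagrange_basis_eq_prod_div, mul_comm]

/-- Summation over `Fin n` split along the stride-`K` partitions. -/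
theorem sum_strideIx {M : Type*} [AddCommMonoid M] {n : ℕ} (K m : ℕ) (hnKm : n = K * m)
    (f : Fin n → M) :
    ∑ j : Fin K, ∑ t : Fin m, f (strideIx K m hnKm t j) = ∑ μ, f μ := by
  rw [Finset.sum_comm, ← Fintype.sum_prod_type']
  refine Fintype.sum_equiv
    (finProdFinEquiv.trans (finCongr ((mul_comm m K).trans hnKm.symm))) _ _ fun p => ?_
  congr 1
  ext
  simp [strideIx, add_comm]

/-- If `x ^ (K * m) = 1`, the factor `i` of an exponent `K * i * t` of `x` may be reduced modulo `m`. -/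
theorem pow_mul_mod_mul {M : Type*} [Monoid M] {x : M} {K m : ℕ} (hx : x ^ (K * m) = 1)
    (i t : ℕ) : x ^ (K * (i % m) * t) = x ^ (K * i * t) := by
  have h : x ^ (K * (i % m)) = x ^ (K * i) := by
    conv_rhs => rw [← Nat.mod_add_div i m, mul_add, pow_add, ← mul_assoc, pow_mul x (K * m), hx,
      one_pow, mul_one]
  rw [pow_mul, h, ← pow_mul]

/-- correctness of the multiparty `FFT_D⁻¹` algorithm, Algorithm 5:
with `u` the Lagrange sharing polynomial of the stride-`K` partitions `a^{(j)}` of `a`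
(randomness `v`), and `u''(z) = ∑_γ FFT_{S'}⁻¹(u(α_γ)) ∏_{k≠γ} (z−α_k)/(α_γ−α_k)`,
the prover's output `η^{−i}·(1/K)·∑_{j<K} ω^{−ij} (u''(β_j))_{i mod m}` equals
`(FFT_D⁻¹(a))_i = η^{−i}·(1/n) ∑_μ ω^{−iμ} a_μ`. -/
theorem multiparty_inverse_fft_D_correctness
    {F : Type*} [Field F] (n K T m : ℕ) (hn : 0 < n) (hK : 0 < K) (hT : 0 < T) (hm : 0 < m)
    (hnKm : n = K * m)
    (ω : F) (hω1 : ω ^ n = 1) (hωprim : ∀ m', 0 < m' → m' < n → ω ^ m' ≠ 1)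
    (η : F) (hη0 : η ≠ 0) (hηS : ∀ i : Fin n, η ≠ ω ^ (i : ℕ))
    (β : Fin (K + T) → F) (α : Fin (K + T) → F)
    (hβ : Function.Injective β) (hα : Function.Injective α)
    (hαβ : ∀ i j, α i ≠ β j)
    (a : Fin n → F) (v : Fin T → Fin m → F)
    (u : F → Fin m → F)
    (hu : ∀ z, u z =
      (∑ j : Fin K, (∏ k ∈ Finset.univ.erase (Fin.castAdd T j),
          (z - β k) / (β (Fin.castAdd T j) - β k)) •
            (fun t : Fin m => a (strideIx K m hnKm t j))) +
      (∑ j : Fin T, (∏ k ∈ Finset.univ.erase (Fin.natAdd K j),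
          (z - β k) / (β (Fin.natAdd K j) - β k)) • v j))
    (u'' : F → Fin m → F)
    (hu'' : ∀ z, u'' z = ∑ γ : Fin (K + T),
      (∏ k ∈ Finset.univ.erase γ, (z - α k) / (α γ - α k)) •
        (fun r : Fin m => (m : F)⁻¹ * ∑ t : Fin m, ω⁻¹ ^ (K * (r : ℕ) * (t : ℕ)) * u (α γ) t))
    (i : Fin n) :
    η⁻¹ ^ (i : ℕ) * ((K : F)⁻¹ * ∑ j : Fin K,
        ω⁻¹ ^ ((i : ℕ) * (j : ℕ)) *
          u'' (β (Fin.castAdd T j)) ⟨(i : ℕ) % m, Nat.mod_lt _ hm⟩) =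
    η⁻¹ ^ (i : ℕ) * ((n : F)⁻¹ * ∑ μ : Fin n, ω⁻¹ ^ ((i : ℕ) * (μ : ℕ)) * a μ) := by
  set w : Fin m → Fin (K + T) → F := fun t =>
    Fin.addCases (fun j => a (strideIx K m hnKm t j)) (fun j => v j t) with hw
  have hu_eval : ∀ z t, u z t = (Lagrange.interpolate Finset.univ β (w t)).eval z := by
    intro z t
    simp [hu, hw, Lagrange.interpolate_apply, Polynomial.eval_finsetSum,
      eval_lagrange_basis_eq_prod_div, Fin.sum_univ_add, mul_comm]
  have hu_node : ∀ (j : Fin K) t, u (β (Fin.castAdd T j)) t = a (strideIx K m hnKm t j) := by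
    intro j t
    rw [hu_eval, Lagrange.eval_interpolate_at_node _ hβ.injOn (Finset.mem_univ _)]
    simp [hw]
  have hu''_eval : ∀ z r, u'' z r =
      (m : F)⁻¹ * ∑ t : Fin m, ω⁻¹ ^ (K * (r : ℕ) * (t : ℕ)) * u z t := by
    intro z r
    simp only [hu'', Finset.sum_apply, Pi.smul_apply, smul_eq_mul, Finset.mul_sum]
    rw [Finset.sum_comm]
    refine Finset.sum_congr rfl fun t _ => ?_
    rw [hu_eval z, ← sum_prod_div_mul_eval_interpolate hβ hα, Finset.mul_sum, Finset.mul_sum]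
    refine Finset.sum_congr rfl fun γ _ => ?_
    rw [hu_eval]
    ring
  have hω_inv : ω⁻¹ ^ (K * m) = 1 := by rw [← hnKm, inv_pow, hω1, inv_one]
  congr 1
  rw [← sum_strideIx K m hnKm]
  simp only [hu''_eval, hu_node, pow_mul_mod_mul hω_inv]
  have hn_inv : (n : F)⁻¹ = (K : F)⁻¹ * (m : F)⁻¹ := by rw [hnKm, Nat.cast_mul, mul_inv]
  rw [hn_inv, mul_assoc, Finset.mul_sum _ _ (m : F)⁻¹]
  congr 1
  refine Finset.sum_congr rfl fun j _ => ?_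
  rw [mul_left_comm, Finset.mul_sum]
  congr 1
  refine Finset.sum_congr rfl fun t _ => ?_
  rw [← mul_assoc, ← pow_add]
  congr 2
  simp only [strideIx]
  ring
end
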